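/- arXiv:2510.07753 — 5 statements merged into one kernel-verified Lean document; each statement's English description precedes it below -/
import Mathlib

section
/- Let n ≥ 3 be odd and let Γ be an access structure on n players satisfying monotonicity, no-cloning and no-redundancy. If the minimum of |A| over all A ∈ Γ_min equals (n+1)/2, then Γ is the (n+1)/2-threshold structure, i.e. Γ_min is exactly the family of all subsets of {1,…,n} of size (n+1)/2. -/
open Finset

/-- Monotonicity of an access structure on `n` players (players = `Fin n`). -/
def Monotonic {n : ℕ} (Γ : Finset (Fin n) → Prop) : Prop :=
  ∀ A B : Finset (Fin n), Γ A → A ⊆ B → Γ B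

/-- No-cloning: a set is authorized iff its complement is not. -/
def NoCloning {n : ℕ} (Γ : Finset (Fin n) → Prop) : Prop :=
  ∀ A : Finset (Fin n), Γ A ↔ ¬ Γ Aᶜ

/-- `A` is a minimal authorized set of `Γ`. -/
def IsMinimal {n : ℕ} (Γ : Finset (Fin n) → Prop) (A : Finset (Fin n)) : Prop :=
  Γ A ∧ ∀ B : Finset (Fin n), B ⊂ A → ¬ Γ B

/-- No-redundancy: every player lies in some minimal authorized set. -/
def NoRedundancy {n : ℕ} (Γ : Finset (Fin n) → Prop) : Prop :=
  ∀ i : Fin n, ∃ A : Finset (Fin n), IsMinimal Γ A ∧ i ∈ A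

noncomputable section

/-- Combine an assignment on `A` and one on `Aᶜ` into a full bit string. -/
def glue {m : ℕ} (A : Finset (Fin m)) (u : {x // x ∈ A} → Fin 2)
    (w : {x // x ∈ Aᶜ} → Fin 2) : Fin m → Fin 2 :=
  fun x => if h : x ∈ A then u ⟨x, h⟩ else w ⟨x, Finset.mem_compl.mpr h⟩

/-- Reduced density matrix of the pure state `ψ` on the qubit positions in `A`:
the partial trace over the positions outside `A` of `ψψ†`. -/
def reducedDensity {m : ℕ} (ψ : (Fin m → Fin 2) → ℂ) (A : Finset (Fin m)) :
    Matrix ({x // x ∈ A} → Fin 2) ({x // x ∈ A} → Fin 2) ℂ :=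
  fun u v => ∑ w : {x // x ∈ Aᶜ} → Fin 2,
    ψ (glue A u w) * (starRingEnd ℂ) (ψ (glue A v w))

/-- The reduction of `ψ` to `A` is maximally mixed, i.e. equals `2^{-|A|} · I`. -/
def MaximallyMixed {m : ℕ} (ψ : (Fin m → Fin 2) → ℂ) (A : Finset (Fin m)) : Prop :=
  reducedDensity ψ A =
    ((2 : ℂ) ^ A.card)⁻¹ •
      (1 : Matrix ({x // x ∈ A} → Fin 2) ({x // x ∈ A} → Fin 2) ℂ)

open Classical in
/-- Von Neumann entropy (natural logarithm): sum of `-λ log λ` over the eigenvalues. -/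
def vnEntropy {ι : Type} [Fintype ι] [DecidableEq ι] (ρ : Matrix ι ι ℂ) : ℝ :=
  if h : ρ.IsHermitian then ∑ i, Real.negMulLog (h.eigenvalues i) else 0

/-- Entropy of the reduction of `ψ` to the set `A` of qubit positions. -/
def Sent {m : ℕ} (ψ : (Fin m → Fin 2) → ℂ) (A : Finset (Fin m)) : ℝ :=
  vnEntropy (reducedDensity ψ A)

/-- The qubit positions (in `{0,1,…,n} = Fin (n+1)`, where `0` is the reference qubit)
of a set of players `A ⊆ Fin n`: player `i` holds position `i.succ`. -/
def posOf {n : ℕ} (A : Finset (Fin n)) : Finset (Fin (n + 1)) := A.image Fin.succ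

/-- `ψ` is a pure QSS state for the access structure `Γ`: a normalized pure state of
`n+1` qubits (position `0` being the reference qubit `R`) satisfying Recoverability
`S(R) + S(A) - S(R ∪ A) = 2 log 2` for authorized `A` and Secrecy
`S(R) + S(B) - S(R ∪ B) = 0` for unauthorized `B`. -/
structure IsPureQSSState {n : ℕ} (Γ : Finset (Fin n) → Prop)
    (ψ : (Fin (n + 1) → Fin 2) → ℂ) : Prop where
  normalized : ∑ x : Fin (n + 1) → Fin 2, ‖ψ x‖ ^ 2 = 1
  recover : ∀ A : Finset (Fin n), Γ A →
    Sent ψ {0} + Sent ψ (posOf A) - Sent ψ (insert 0 (posOf A)) = 2 * Real.log 2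
  secrecy : ∀ B : Finset (Fin n), ¬ Γ B →
    Sent ψ {0} + Sent ψ (posOf B) - Sent ψ (insert 0 (posOf B)) = 0

end

theorem exists_isMinimal_sub {n : ℕ} (Γ : Finset (Fin n) → Prop) (A : Finset (Fin n)) (hA : Γ A) :
    ∃ B : Finset (Fin n), IsMinimal Γ B ∧ B ⊆ A := by
  induction A using Finset.strongInduction with
  | H A ih =>
    by_cases h : ∃ B : Finset (Fin n), B ⊂ A ∧ Γ B
    · obtain ⟨B, hB, hΓ⟩ := h
      obtain ⟨C, hC, hCB⟩ := ih B hB hΓ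
      exact ⟨C, hC, hCB.trans hB.subset⟩
    · exact ⟨A, ⟨hA, fun B hB hΓ => h ⟨B, hB, hΓ⟩⟩, Finset.Subset.refl A⟩

theorem stmt1 (n : ℕ) (hn : 3 ≤ n) (hodd : Odd n) (Γ : Finset (Fin n) → Prop)
    (hmono : Monotonic Γ) (hnc : NoCloning Γ) (hnr : NoRedundancy Γ)
    (hmin : IsLeast {k : ℕ | ∃ A : Finset (Fin n), IsMinimal Γ A ∧ A.card = k} ((n + 1) / 2)) :
    ∀ A : Finset (Fin n), IsMinimal Γ A ↔ A.card = (n + 1) / 2 := by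
  have key : ∀ A : Finset (Fin n), Γ A → (n + 1) / 2 ≤ A.card := by
    intro A hA
    obtain ⟨B, hB, hBA⟩ := exists_isMinimal_sub Γ A hA
    exact (hmin.2 ⟨B, hB, rfl⟩).trans (Finset.card_le_card hBA)
  obtain ⟨m, hm⟩ := hodd
  have key2 : ∀ A : Finset (Fin n), (n + 1) / 2 ≤ A.card → Γ A := by
    intro A hA
    rw [hnc A]
    intro hc
    have h1 := key _ hc
    rw [Finset.card_compl, Fintype.card_fin] at h1
    omega
  intro A
  constructor
  · rintro ⟨hA, hAm⟩
    refine le_antisymm ?_ (key A hA)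
    by_contra hlt
    push Not at hlt
    obtain ⟨B, hBA, hB⟩ := Finset.exists_subset_card_eq hlt.le
    refine hAm B (Finset.ssubset_iff_subset_ne.2 ⟨hBA, ?_⟩) (key2 B hB.ge)
    rintro rfl
    omega
  · intro hA
    refine ⟨key2 A hA.ge, fun B hB hΓ => ?_⟩
    have h1 := key B hΓ
    have h2 := Finset.card_lt_card hB
    omega
end

section
/- Let n ≥ 5 and let Γ be a 3-homogeneous access structure on n players satisfying monotonicity, no-cloning and no-redundancy. Suppose A₁ = {i, j, k₁} ∈ Γ_min and A₂ = {i, j, k₂} ∈ Γ_min, where i, j, k₁, k₂ are pairwise distinct. Then there exists k₃ ∈ {1,…,n} \ (A₁ ∪ A₂) such that A₃ = {k₁, k₂, k₃} ∈ Γ_min, and moreover every B ∈ Γ_min satisfies |B ∩ (A₁ ∪ A₂ ∪ A₃)| ≥ 2. -/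
open Finset

theorem exists_min_sub {n : ℕ} (Γ : Finset (Fin n) → Prop) (A : Finset (Fin n)) (hA : Γ A) :
    ∃ C, C ⊆ A ∧ IsMinimal Γ C := by
  induction A using Finset.strongInduction with
  | H A ih =>
    by_cases h : ∃ B, B ⊂ A ∧ Γ B
    · obtain ⟨B, hBA, hB⟩ := h
      obtain ⟨C, hC, hm⟩ := ih B hBA hB
      exact ⟨C, hC.trans hBA.subset, hm⟩
    · exact ⟨A, Finset.Subset.refl A, hA, fun B hB hg => h ⟨B, hB, hg⟩⟩

theorem meet_of_auth {n : ℕ} (Γ : Finset (Fin n) → Prop) (hmono : Monotonic Γ)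
    (hnc : NoCloning Γ) (A B : Finset (Fin n)) (hA : Γ A) (hB : Γ B) :
    ∃ x, x ∈ A ∧ x ∈ B := by
  by_contra h
  push Not at h
  exact (hnc A).1 hA (hmono B _ hB (fun x hx => Finset.mem_compl.2 (fun hx' => h x hx' hx)))

theorem stmt2 (n : ℕ) (hn : 5 ≤ n) (Γ : Finset (Fin n) → Prop)
    (hmono : Monotonic Γ) (hnc : NoCloning Γ) (hnr : NoRedundancy Γ)
    (hhom : ∀ A : Finset (Fin n), IsMinimal Γ A → A.card = 3)
    (i j k₁ k₂ : Fin n)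
    (hij : i ≠ j) (hik₁ : i ≠ k₁) (hik₂ : i ≠ k₂)
    (hjk₁ : j ≠ k₁) (hjk₂ : j ≠ k₂) (hk₁k₂ : k₁ ≠ k₂)
    (h1 : IsMinimal Γ {i, j, k₁}) (h2 : IsMinimal Γ {i, j, k₂}) :
    ∃ k₃ : Fin n, k₃ ∉ ({i, j, k₁, k₂} : Finset (Fin n)) ∧
      IsMinimal Γ {k₁, k₂, k₃} ∧
      ∀ B : Finset (Fin n), IsMinimal Γ B →
        2 ≤ (B ∩ ({i, j, k₁, k₂, k₃} : Finset (Fin n))).card := by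
  have hU : ¬ Γ {i, j} := by
    apply h1.2
    rw [Finset.ssubset_iff_of_subset (by
      intro x hx
      simp only [Finset.mem_insert, Finset.mem_singleton] at hx ⊢
      exact hx.elim Or.inl (fun h => Or.inr (Or.inl h)))]
    exact ⟨k₁, by simp, by simp [hik₁.symm, hjk₁.symm]⟩
  have hUc : Γ ({i, j} : Finset (Fin n))ᶜ := by
    by_contra h
    exact hU ((hnc _).2 h)
  obtain ⟨C, hC, hCm⟩ := exists_min_sub Γ _ hUc
  have hCi : i ∉ C := fun h => by simpa using hC h
  have hCj : j ∉ C := fun h => by simpa using hC h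
  have hk1 : k₁ ∈ C := by
    obtain ⟨x, hx, hx'⟩ := meet_of_auth Γ hmono hnc _ _ h1.1 hCm.1
    simp only [Finset.mem_insert, Finset.mem_singleton] at hx
    rcases hx with rfl | rfl | rfl <;> first | assumption | contradiction
  have hk2 : k₂ ∈ C := by
    obtain ⟨x, hx, hx'⟩ := meet_of_auth Γ hmono hnc _ _ h2.1 hCm.1
    simp only [Finset.mem_insert, Finset.mem_singleton] at hx
    rcases hx with rfl | rfl | rfl <;> first | assumption | contradiction
  have hc := hhom C hCm
  have hd : ((C.erase k₁).erase k₂).card = 1 := by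
    rw [Finset.card_erase_of_mem (by simp [hk2, hk₁k₂.symm]), Finset.card_erase_of_mem hk1, hc]
  obtain ⟨k₃, hk3⟩ := Finset.card_eq_one.1 hd
  have hm3 : k₃ ∈ (C.erase k₁).erase k₂ := by rw [hk3]; simp
  simp only [Finset.mem_erase] at hm3
  obtain ⟨h32, h31, h3C⟩ := hm3
  have hCeq : C = {k₁, k₂, k₃} := by
    rw [← hk3, Finset.insert_erase (by simp [hk2, hk₁k₂.symm]), Finset.insert_erase hk1] <;> simp
  have h3i : k₃ ≠ i := fun h => hCi (h ▸ h3C)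
  have h3j : k₃ ≠ j := fun h => hCj (h ▸ h3C)
  refine ⟨k₃, by simp [h3i, h3j, h31, h32], hCeq ▸ hCm, ?_⟩
  intro B hB
  rw [hCeq] at hCm
  obtain ⟨x, hx, hxB⟩ := meet_of_auth Γ hmono hnc _ _ h1.1 hB.1
  obtain ⟨y, hy, hyB⟩ := meet_of_auth Γ hmono hnc _ _ h2.1 hB.1
  obtain ⟨z, hz, hzB⟩ := meet_of_auth Γ hmono hnc _ _ hCm.1 hB.1
  simp only [Finset.mem_insert, Finset.mem_singleton] at hx hy hz
  by_contra hlt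
  have hxU : x ∈ B ∩ {i, j, k₁, k₂, k₃} := by
    clear hlt
    simp only [Finset.mem_inter, Finset.mem_insert, Finset.mem_singleton]
    exact ⟨hxB, by rcases hx with h | h | h <;> simp only [h, true_or, or_true]⟩
  have hyU : y ∈ B ∩ {i, j, k₁, k₂, k₃} := by
    simp only [Finset.mem_inter, Finset.mem_insert, Finset.mem_singleton]
    exact ⟨hyB, by rcases hy with h | h | h <;> simp only [h, true_or, or_true]⟩
  have hzU : z ∈ B ∩ {i, j, k₁, k₂, k₃} := by
    simp only [Finset.mem_inter, Finset.mem_insert, Finset.mem_singleton]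
    exact ⟨hzB, by rcases hz with h | h | h <;> simp only [h, true_or, or_true]⟩
  have hle := Finset.card_le_one.1 (by omega : (B ∩ {i, j, k₁, k₂, k₃}).card ≤ 1)
  have hxy := hle x hxU y hyU
  have hxz := hle x hxU z hzU
  rw [← hxy] at hy
  rw [← hxz] at hz
  clear hle hlt hxU hyU hzU hxy hxz
  rcases hz with h | h | h
  · subst h
    rcases hy with h | h | h
    · exact hik₁ h.symm
    · exact hjk₁ h.symm
    · exact hk₁k₂ h
  · subst h
    rcases hx with h | h | h
    · exact hik₂ h.symm
    · exact hjk₂ h.symm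
    · exact hk₁k₂ h.symm
  · subst h
    rcases hx with h | h | h
    · exact h3i h
    · exact h3j h
    · exact h31 h
end

section
/- Let Γ be a 3-homogeneous access structure on 7 players satisfying monotonicity, no-cloning and no-redundancy. Then |Γ_min| ≥ 7. -/
open Finset

theorem exists_minimal_sub {n : ℕ} (Γ : Finset (Fin n) → Prop) (S : Finset (Fin n)) :
    Γ S → ∃ A, A ⊆ S ∧ IsMinimal Γ A := by
  induction S using Finset.strongInduction with
  | H S ih =>
    intro hS
    by_cases h : ∃ B, B ⊂ S ∧ Γ B
    · obtain ⟨B, hB, hG⟩ := h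
      obtain ⟨A, hA, hm⟩ := ih B hB hG
      exact ⟨A, hA.trans hB.subset, hm⟩
    · exact ⟨S, Finset.Subset.refl S, hS, fun B hB hG => h ⟨B, hB, hG⟩⟩

theorem stmt3 (Γ : Finset (Fin 7) → Prop)
    (hmono : Monotonic Γ) (hnc : NoCloning Γ) (hnr : NoRedundancy Γ)
    (hhom : ∀ A : Finset (Fin 7), IsMinimal Γ A → A.card = 3) :
    7 ≤ {A : Finset (Fin 7) | IsMinimal Γ A}.ncard := by
  classical
  set M : Finset (Finset (Fin 7)) := Finset.univ.filter (fun A => IsMinimal Γ A) with hM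
  have hset : {A : Finset (Fin 7) | IsMinimal Γ A} = (M : Set (Finset (Fin 7))) := by
    ext A; simp [hM]
  rw [hset, Set.ncard_coe_finset]
  have hsub : Finset.powersetCard 4 (Finset.univ : Finset (Fin 7)) ⊆
      M.image (fun A => Aᶜ) ∪ M.biUnion (fun A => Aᶜ.image (fun x => insert x A)) := by
    intro S hS
    have hS4 : S.card = 4 := (Finset.mem_powersetCard.mp hS).2
    by_cases hG : Γ S
    · obtain ⟨A, hA, hm⟩ := exists_minimal_sub Γ S hG
      have h3 := hhom A hm
      obtain ⟨x, hx, hxS⟩ := Finset.exists_eq_insert_iff.mpr ⟨hA, by omega⟩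
      refine Finset.mem_union_right _ (Finset.mem_biUnion.mpr ⟨A, by simp [hM, hm], ?_⟩)
      exact Finset.mem_image.mpr ⟨x, Finset.mem_compl.mpr hx, hxS⟩
    · have hGc : Γ Sᶜ := by
        by_contra h
        exact hG ((hnc S).mpr h)
      obtain ⟨A, hA, hm⟩ := exists_minimal_sub Γ Sᶜ hGc
      have h3 := hhom A hm
      have hc : Sᶜ.card = 3 := by rw [Finset.card_compl, hS4]; simp
      have hAS : A = Sᶜ := Finset.eq_of_subset_of_card_le hA (by omega)
      exact Finset.mem_union_left _
        (Finset.mem_image.mpr ⟨A, by simp [hM, hm], by simp [hAS]⟩)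
  have h1 := Finset.card_le_card hsub
  have h2 := Finset.card_union_le (M.image (fun A => Aᶜ))
    (M.biUnion (fun A => Aᶜ.image (fun x => insert x A)))
  have h3 : (M.image (fun A => Aᶜ)).card ≤ M.card := Finset.card_image_le
  have h4 : (M.biUnion (fun A => Aᶜ.image (fun x => insert x A))).card ≤ M.card * 4 := by
    apply Finset.card_biUnion_le_card_mul
    intro A hA
    have h3 := hhom A (Finset.mem_filter.mp hA).2
    refine Finset.card_image_le.trans ?_
    rw [Finset.card_compl, h3]; simp
  have h5 : (Finset.powersetCard 4 (Finset.univ : Finset (Fin 7))).card = 35 := by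
    rw [Finset.card_powersetCard]; rfl
  omega
end

section
/- Let Γ be a 3-homogeneous access structure on 7 players satisfying monotonicity, no-cloning and no-redundancy, and suppose that every 2-element subset of {1,…,7} is contained in at least one set of Γ_min. Then |Γ_min| = 7 and every 2-element subset of {1,…,7} is contained in exactly one set of Γ_min (i.e., Γ_min is a Fano plane). -/
open Finset

structure GoodFam (F : Finset (Fin 7) → Prop) : Prop where
  c3 : ∀ A, F A → A.card = 3
  int : ∀ A B, F A → F B → ¬ Disjoint A B
  cov : ∀ P : Finset (Fin 7), P.card = 2 → ∃ A, F A ∧ P ⊆ A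
  miss : ∀ a, ∃ A, F A ∧ a ∉ A

lemma GoodFam.comp {F : Finset (Fin 7) → Prop} (h : GoodFam F) (f : Fin 7 → Fin 7)
    (hf : Function.Injective f) : GoodFam (fun A => F (A.image f)) := by
  have hs : Function.Surjective f := Finite.surjective_of_injective hf
  have key : ∀ A : Finset (Fin 7), ∃ B : Finset (Fin 7), B.image f = A := by
    intro A
    refine ⟨Finset.univ.filter (fun x => f x ∈ A), ?_⟩
    ext y
    simp only [mem_image, mem_filter, mem_univ, true_and]
    constructor
    · rintro ⟨x, hx, rfl⟩; exact hx
    · intro hy; obtain ⟨x, rfl⟩ := hs y; exact ⟨x, hy, rfl⟩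
  constructor
  · intro A hA
    rw [← Finset.card_image_of_injective A hf]; exact h.c3 _ hA
  · intro A B hA hB hd
    exact h.int _ _ hA hB ((Finset.disjoint_image hf).2 hd)
  · intro P hP
    obtain ⟨A, hA, hPA⟩ := h.cov (P.image f) (by rw [Finset.card_image_of_injective _ hf, hP])
    obtain ⟨B, rfl⟩ := key A
    exact ⟨B, hA, (Finset.image_subset_image_iff hf).1 hPA⟩
  · intro a
    obtain ⟨A, hA, ha⟩ := h.miss (f a)
    obtain ⟨B, rfl⟩ := key A
    exact ⟨B, hA, fun hb => ha (Finset.mem_image_of_mem f hb)⟩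

set_option maxRecDepth 100000 in
lemma GoodFam.step1 {F : Finset (Fin 7) → Prop} (h : GoodFam F)
    (h1 : F {0,1,2}) (h2 : F {0,1,3}) (h3 : F {0,4,5}) (h4 : F {0,5,6}) : False := by
  have g1 : F {0,2,4} := by
    obtain ⟨A, hA, hP⟩ := h.cov {2,4} (by decide)
    have a0 := h.c3 A hA
    have a1 := h.int A _ hA h2
    have a2 := h.int A _ hA h4
    have : A = {0,2,4} := by clear hA; revert A; decide
    rwa [← this]
  have g2 : F {0,2,6} := by
    obtain ⟨A, hA, hP⟩ := h.cov {2,6} (by decide)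
    have a0 := h.c3 A hA
    have a1 := h.int A _ hA h2
    have a2 := h.int A _ hA h3
    have : A = {0,2,6} := by clear hA; revert A; decide
    rwa [← this]
  have g3 : F {0,3,4} := by
    obtain ⟨A, hA, hP⟩ := h.cov {3,4} (by decide)
    have a0 := h.c3 A hA
    have a1 := h.int A _ hA h1
    have a2 := h.int A _ hA h4
    have : A = {0,3,4} := by clear hA; revert A; decide
    rwa [← this]
  have g4 : F {0,3,6} := by
    obtain ⟨A, hA, hP⟩ := h.cov {3,6} (by decide)
    have a0 := h.c3 A hA
    have a1 := h.int A _ hA h1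
    have a2 := h.int A _ hA h3
    have : A = {0,3,6} := by clear hA; revert A; decide
    rwa [← this]
  have q : ∀ A, F A → 0 ∉ A → A = {2,3,5} ∨ A = {1,4,6} := by
    intro A hA h0
    have a0 := h.c3 A hA
    have a1 := h.int A _ hA h1
    have a2 := h.int A _ hA h2
    have a3 := h.int A _ hA h3
    have a4 := h.int A _ hA h4
    have b1 := h.int A _ hA g1
    have b2 := h.int A _ hA g2
    have b3 := h.int A _ hA g3
    have b4 := h.int A _ hA g4
    clear hA; revert A; decide
  obtain ⟨A, hA, h0⟩ := h.miss 0
  rcases q A hA h0 with rfl | rfl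
  · obtain ⟨B, hB, hP⟩ := h.cov {4,6} (by decide)
    have a0 := h.c3 B hB
    have a1 := h.int B _ hB hA
    have a2 : 0 ∉ B := by clear hB; revert B; decide
    rcases q B hB a2 with rfl | rfl
    · revert hP; decide
    · revert a1; decide
  · obtain ⟨B, hB, hP⟩ := h.cov {2,3} (by decide)
    have a0 := h.c3 B hB
    have a1 := h.int B _ hB hA
    have a2 : 0 ∉ B := by clear hB; revert B; decide
    rcases q B hB a2 with rfl | rfl
    · revert a1; decide
    · revert hP; decide

lemma GoodFam.step1' {F : Finset (Fin 7) → Prop} (h : GoodFam F) (f : Fin 7 → Fin 7)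
    (hf : Function.Injective f)
    (h1 : F (({0,1,2} : Finset (Fin 7)).image f)) (h2 : F (({0,1,3} : Finset (Fin 7)).image f))
    (h3 : F (({0,4,5} : Finset (Fin 7)).image f))
    (h4 : F (({0,5,6} : Finset (Fin 7)).image f)) : False :=
  (h.comp f hf).step1 h1 h2 h3 h4

lemma fam_cast {F : Finset (Fin 7) → Prop} {A B : Finset (Fin 7)} (h : F A) (e : A = B) : F B :=
  e ▸ h

set_option maxRecDepth 100000 in
lemma GoodFam.step2 {F : Finset (Fin 7) → Prop} (h : GoodFam F)
    (h1 : F {0,1,2}) (h2 : F {0,1,3}) : False := by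
  have p1 : F {0,4,5} ∨ F {1,4,5} := by
    obtain ⟨A, hA, hP⟩ := h.cov {4,5} (by decide)
    have a0 := h.c3 A hA
    have a1 := h.int A _ hA h1
    have a2 := h.int A _ hA h2
    have : A = {0,4,5} ∨ A = {1,4,5} := by clear hA; revert A; decide
    rcases this with rfl | rfl <;> simp [hA]
  have p2 : F {0,4,6} ∨ F {1,4,6} := by
    obtain ⟨A, hA, hP⟩ := h.cov {4,6} (by decide)
    have a0 := h.c3 A hA
    have a1 := h.int A _ hA h1
    have a2 := h.int A _ hA h2
    have : A = {0,4,6} ∨ A = {1,4,6} := by clear hA; revert A; decide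
    rcases this with rfl | rfl <;> simp [hA]
  have p3 : F {0,5,6} ∨ F {1,5,6} := by
    obtain ⟨A, hA, hP⟩ := h.cov {5,6} (by decide)
    have a0 := h.c3 A hA
    have a1 := h.int A _ hA h1
    have a2 := h.int A _ hA h2
    have : A = {0,5,6} ∨ A = {1,5,6} := by clear hA; revert A; decide
    rcases this with rfl | rfl <;> simp [hA]
  rcases p1 with p1 | p1 <;> rcases p2 with p2 | p2 <;> rcases p3 with p3 | p3
  · exact h.step1' ![0,1,2,3,5,4,6] (by decide) (fam_cast h1 (by decide)) (fam_cast h2 (by decide))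
      (fam_cast p1 (by decide)) (fam_cast p2 (by decide))
  · exact h.step1' ![0,1,2,3,5,4,6] (by decide) (fam_cast h1 (by decide)) (fam_cast h2 (by decide))
      (fam_cast p1 (by decide)) (fam_cast p2 (by decide))
  · exact h.step1' ![0,1,2,3,4,5,6] (by decide) (fam_cast h1 (by decide)) (fam_cast h2 (by decide))
      (fam_cast p1 (by decide)) (fam_cast p3 (by decide))
  · exact h.step1' ![1,0,2,3,4,6,5] (by decide) (fam_cast h1 (by decide)) (fam_cast h2 (by decide))
      (fam_cast p2 (by decide)) (fam_cast p3 (by decide))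
  · exact h.step1' ![0,1,2,3,4,6,5] (by decide) (fam_cast h1 (by decide)) (fam_cast h2 (by decide))
      (fam_cast p2 (by decide)) (fam_cast p3 (by decide))
  · exact h.step1' ![1,0,2,3,4,5,6] (by decide) (fam_cast h1 (by decide)) (fam_cast h2 (by decide))
      (fam_cast p1 (by decide)) (fam_cast p3 (by decide))
  · exact h.step1' ![1,0,2,3,5,4,6] (by decide) (fam_cast h1 (by decide)) (fam_cast h2 (by decide))
      (fam_cast p1 (by decide)) (fam_cast p2 (by decide))
  · exact h.step1' ![1,0,2,3,5,4,6] (by decide) (fam_cast h1 (by decide)) (fam_cast h2 (by decide))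
      (fam_cast p1 (by decide)) (fam_cast p2 (by decide))

lemma GoodFam.uniq {F : Finset (Fin 7) → Prop} (h : GoodFam F) {A B P : Finset (Fin 7)}
    (hA : F A) (hB : F B) (hP : P.card = 2) (hPA : P ⊆ A) (hPB : P ⊆ B) : A = B := by
  by_contra hne
  have cA := h.c3 A hA
  have cB := h.c3 B hB
  obtain ⟨x, hx⟩ := Finset.card_eq_one.1 (show (A \ P).card = 1 by
    rw [Finset.card_sdiff_of_subset hPA]; omega)
  obtain ⟨y, hy⟩ := Finset.card_eq_one.1 (show (B \ P).card = 1 by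
    rw [Finset.card_sdiff_of_subset hPB]; omega)
  obtain ⟨a, b, hab, rfl⟩ := Finset.card_eq_two.1 hP
  have eA : A = {a, b, x} := by
    rw [← Finset.union_sdiff_of_subset hPA, hx]; ext; simp
  have eB : B = {a, b, y} := by
    rw [← Finset.union_sdiff_of_subset hPB, hy]; ext; simp
  have hx' : x ∈ A \ {a, b} := by rw [hx]; simp
  have hy' : y ∈ B \ {a, b} := by rw [hy]; simp
  have hxy : x ≠ y := by rintro rfl; exact hne (eA.trans eB.symm)
  simp only [mem_sdiff, mem_insert, mem_singleton, not_or] at hx' hy'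
  obtain ⟨-, hxa, hxb⟩ := hx'
  obtain ⟨-, hya, hyb⟩ := hy'
  have c4 : ({a, b, x, y} : Finset (Fin 7)).card = 4 := by
    rw [Finset.card_insert_of_notMem, Finset.card_insert_of_notMem, Finset.card_pair hxy] <;>
      simp <;> grind
  obtain ⟨c, d, e, hcd, hce, hde, hc⟩ := Finset.card_eq_three.1
    (show (({a, b, x, y} : Finset (Fin 7))ᶜ).card = 3 by
      rw [Finset.card_compl, c4]; simp)
  have mc : c ∈ ({a, b, x, y} : Finset (Fin 7))ᶜ := by rw [hc]; simp
  have md : d ∈ ({a, b, x, y} : Finset (Fin 7))ᶜ := by rw [hc]; simp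
  have me : e ∈ ({a, b, x, y} : Finset (Fin 7))ᶜ := by rw [hc]; simp
  simp only [mem_compl, mem_insert, mem_singleton, not_or] at mc md me
  have hf : Function.Injective ![a, b, x, y, c, d, e] := by
    intro i j hij
    fin_cases i <;> fin_cases j <;> simp at hij ⊢ <;> grind
  refine (h.comp _ hf).step2 ?_ ?_
  · refine fam_cast hA ?_
    rw [eA]; simp [Finset.image_insert]
  · refine fam_cast hB ?_
    rw [eB]; simp [Finset.image_insert]

theorem stmt4 (Γ : Finset (Fin 7) → Prop)
    (hmono : Monotonic Γ) (hnc : NoCloning Γ) (hnr : NoRedundancy Γ)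
    (hhom : ∀ A : Finset (Fin 7), IsMinimal Γ A → A.card = 3)
    (hcover : ∀ P : Finset (Fin 7), P.card = 2 →
      ∃ A : Finset (Fin 7), IsMinimal Γ A ∧ P ⊆ A) :
    {A : Finset (Fin 7) | IsMinimal Γ A}.ncard = 7 ∧
    ∀ P : Finset (Fin 7), P.card = 2 →
      ∃! A : Finset (Fin 7), IsMinimal Γ A ∧ P ⊆ A := by
  have hex : ∀ A, Γ A → ∃ B, B ⊆ A ∧ IsMinimal Γ B := by
    intro A
    induction A using Finset.strongInduction with
    | H A ih =>
      intro hA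
      by_cases hm : ∃ B, B ⊂ A ∧ Γ B
      · obtain ⟨B, hBA, hB⟩ := hm
        obtain ⟨C, hC, hC'⟩ := ih B hBA hB
        exact ⟨C, hC.trans hBA.1, hC'⟩
      · push Not at hm
        exact ⟨A, subset_rfl, hA, hm⟩
  have good : GoodFam (IsMinimal Γ) := by
    refine ⟨hhom, ?_, hcover, ?_⟩
    · intro A B hA hB hd
      exact (hnc A).1 hA.1 (hmono B _ hB.1 (by
        intro z hz
        rw [Finset.mem_compl]
        exact fun hz' => Finset.disjoint_left.1 hd hz' hz))
    · intro a
      have hn : ¬ Γ {a} := by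
        intro ha
        obtain ⟨B, hB, hm⟩ := hex _ ha
        have := hhom B hm
        have := Finset.card_le_card hB
        simp at this
        omega
      have hc : Γ ({a} : Finset (Fin 7))ᶜ := by
        by_contra hc
        exact hn ((hnc _).2 hc)
      obtain ⟨B, hB, hm⟩ := hex _ hc
      exact ⟨B, hm, fun ha => by simpa using hB ha⟩
  have huniq : ∀ P : Finset (Fin 7), P.card = 2 →
      ∃! A : Finset (Fin 7), IsMinimal Γ A ∧ P ⊆ A := by
    intro P hP
    obtain ⟨A, hA, hPA⟩ := hcover P hP
    exact ⟨A, ⟨hA, hPA⟩, fun B hB => good.uniq hB.1 hA hP hB.2 hPA⟩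
  refine ⟨?_, huniq⟩
  classical
  have e : {A : Finset (Fin 7) | IsMinimal Γ A} =
      ((Finset.univ.filter (fun A => IsMinimal Γ A) : Finset (Finset (Fin 7))) :
        Set (Finset (Fin 7))) := by
    ext; simp
  rw [e, Set.ncard_coe_finset]
  set S := Finset.univ.filter (fun A => IsMinimal Γ A) with hS
  have hb : S.biUnion (fun A => A.powersetCard 2) =
      (Finset.univ : Finset (Fin 7)).powersetCard 2 := by
    ext P
    simp only [mem_biUnion, mem_powersetCard, subset_univ, true_and, hS, mem_filter, mem_univ]
    constructor
    · rintro ⟨A, _, _, hP⟩; exact hP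
    · intro hP
      obtain ⟨A, hA, hPA⟩ := hcover P hP
      exact ⟨A, hA, hPA, hP⟩
  have hcard := congrArg Finset.card hb
  rw [Finset.card_biUnion, Finset.sum_congr rfl (g := fun _ => 3)] at hcard
  · have h21 : ((Finset.univ : Finset (Fin 7)).powersetCard 2).card = 21 := by
      rw [Finset.card_powersetCard]; rfl
    rw [h21, Finset.sum_const, smul_eq_mul] at hcard
    omega
  · intro A hA
    rw [Finset.card_powersetCard, hhom A (Finset.mem_filter.1 hA).2]; rfl
  · intro A hA B hB hne
    simp only [Function.onFun]
    rw [Finset.disjoint_left]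
    intro P hPA hPB
    rw [Finset.mem_powersetCard] at hPA hPB
    exact hne (good.uniq (Finset.mem_filter.1 hA).2 (Finset.mem_filter.1 hB).2
      hPA.2 hPA.1 hPB.1)
end

section
/- Let n ≥ 5, let Γ be a 3-homogeneous access structure on n players satisfying monotonicity, no-cloning and no-redundancy, and let ψ be a pure QSS state for Γ. Then the (n+1)-qubit state ψ is 2-uniform: for every subset A of its qubit positions with |A| ≤ 2, the reduction of ψ to A is maximally mixed. -/
open Finset

open scoped ComplexOrder

open Matrix in
lemma vn_spec {ι : Type} [Fintype ι] [DecidableEq ι] (ρ : Matrix ι ι ℂ) (h : ρ.PosSemidef) :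
    ∃ (W : Matrix ι ι ℂ) (l : ι → ℝ), W * Wᴴ = 1 ∧ Wᴴ * W = 1 ∧ (∀ i, 0 ≤ l i) ∧
      ρ = W * diagonal (fun i => (l i : ℂ)) * Wᴴ ∧ vnEntropy ρ = ∑ i, Real.negMulLog (l i) := by
  refine ⟨h.1.eigenvectorUnitary, h.1.eigenvalues, ?_, ?_, h.eigenvalues_nonneg, ?_, ?_⟩
  · exact Unitary.coe_mul_star_self h.1.eigenvectorUnitary
  · exact Unitary.coe_star_mul_self h.1.eigenvectorUnitary
  · have := h.1.spectral_theorem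
    rw [Unitary.conjStarAlgAut_apply] at this
    exact this
  · rw [vnEntropy, dif_pos h.1]

open Matrix in
lemma schur_horn {κ J : Type} [Fintype κ] [DecidableEq κ] [Fintype J] [DecidableEq J]
    (ρ : Matrix κ κ ℂ) (h : ρ.PosSemidef) (V : Matrix κ J ℂ) (hV : V * Vᴴ = 1)
    (hV' : Vᴴ * V = 1) (d : J → ℝ) (hd : ∀ j, (Vᴴ * ρ * V) j j = (d j : ℂ)) :
    (∀ j, 0 ≤ d j) ∧ vnEntropy ρ ≤ ∑ j, Real.negMulLog (d j) ∧
    (vnEntropy ρ = ∑ j, Real.negMulLog (d j) →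
      ρ = V * diagonal (fun j => (d j : ℂ)) * Vᴴ) := by
  obtain ⟨W, l, hW, hW', hl, hρ, hS⟩ := vn_spec ρ h
  set P : Matrix κ J ℂ := Wᴴ * V with hP
  have hPP : P * Pᴴ = 1 := by
    rw [hP, conjTranspose_mul, conjTranspose_conjTranspose, Matrix.mul_assoc, ← Matrix.mul_assoc V,
      hV, Matrix.one_mul, hW']
  have hPP' : Pᴴ * P = 1 := by
    rw [hP, conjTranspose_mul, conjTranspose_conjTranspose, Matrix.mul_assoc, ← Matrix.mul_assoc W,
      hW, Matrix.one_mul, hV']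
  have hrow : ∀ i, ∑ j, Complex.normSq (P i j) = 1 := by
    intro i
    have := congrFun (congrFun hPP i) i
    simp only [mul_apply, conjTranspose_apply, one_apply_eq, Complex.star_def,
      Complex.mul_conj] at this
    exact_mod_cast this
  have hcol : ∀ j, ∑ i, Complex.normSq (P i j) = 1 := by
    intro j
    have := congrFun (congrFun hPP' j) j
    simp only [mul_apply, conjTranspose_apply, one_apply_eq, Complex.star_def,
      mul_comm (starRingEnd ℂ _), Complex.mul_conj] at this
    exact_mod_cast this
  have hVρ : Vᴴ * ρ * V = Pᴴ * diagonal (fun i => (l i : ℂ)) * P := by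
    rw [hρ, hP, conjTranspose_mul, conjTranspose_conjTranspose]
    simp only [Matrix.mul_assoc]
  have hdj : ∀ j, d j = ∑ i, Complex.normSq (P i j) • l i := by
    intro j
    have := hd j
    rw [hVρ, mul_apply] at this
    simp only [mul_diagonal, conjTranspose_apply, Complex.star_def] at this
    have h2 : (d j : ℂ) = ∑ i, (Complex.normSq (P i j) : ℂ) * l i := by
      rw [← this]
      refine Finset.sum_congr rfl fun i _ => ?_
      rw [← Complex.mul_conj]; ring
    simp only [smul_eq_mul]
    exact_mod_cast h2
  have hSd : vnEntropy ρ = ∑ j, ∑ i, Complex.normSq (P i j) • Real.negMulLog (l i) := by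
    rw [hS, Finset.sum_comm]
    refine Finset.sum_congr rfl fun i _ => ?_
    rw [← Finset.sum_smul, hrow, one_smul]
  have hJ : ∀ j, ∑ i, Complex.normSq (P i j) • Real.negMulLog (l i) ≤ Real.negMulLog (d j) := by
    intro j
    rw [hdj]
    exact Real.concaveOn_negMulLog.le_map_sum (fun i _ => Complex.normSq_nonneg _) (hcol j)
      (fun i _ => hl i)
  refine ⟨fun j => ?_, ?_, ?_⟩
  · rw [hdj]
    exact Finset.sum_nonneg fun i _ => smul_nonneg (Complex.normSq_nonneg _) (hl i)
  · rw [hSd]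
    exact Finset.sum_le_sum fun j _ => hJ j
  · intro heq
    rw [hSd, Finset.sum_eq_sum_iff_of_le (fun j _ => hJ j)] at heq
    have key : diagonal (fun i => (l i : ℂ)) * P = P * diagonal (fun j => (d j : ℂ)) := by
      ext i j
      rw [diagonal_mul, mul_diagonal]
      by_cases hp : P i j = 0
      · simp [hp]
      · have h1 := heq j (Finset.mem_univ _)
        rw [hdj j] at h1
        have h2 := (Real.strictConcaveOn_negMulLog.map_sum_eq_iff'
          (fun i _ => Complex.normSq_nonneg (P i j)) (hcol j) (fun i _ => hl i)).1 h1.symm i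
          (Finset.mem_univ _) (by simpa using hp)
        rw [← hdj j] at h2
        rw [h2, mul_comm]
    have hWP : W * P = V := by rw [hP, ← Matrix.mul_assoc, hW, Matrix.one_mul]
    have : ρ * V = V * diagonal (fun j => (d j : ℂ)) := by
      calc ρ * V = W * (diagonal (fun i => (l i : ℂ)) * P) := by
            rw [hρ, hP]; simp only [Matrix.mul_assoc]
        _ = _ := by rw [key, ← Matrix.mul_assoc, hWP]
    rw [← this, Matrix.mul_assoc, hV, Matrix.mul_one]

lemma eta_two (a b : ℝ) (ha : 0 ≤ a) (hb : 0 ≤ b) :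
    Real.negMulLog a + Real.negMulLog b ≤ Real.negMulLog (a + b) + (a + b) * Real.log 2 ∧
    (Real.negMulLog a + Real.negMulLog b = Real.negMulLog (a + b) + (a + b) * Real.log 2 →
      a = b) := by
  have hm : Real.negMulLog (a + b) + (a + b) * Real.log 2 = 2 * Real.negMulLog ((a + b) / 2) := by
    rcases eq_or_ne (a + b) 0 with h | h
    · simp [h]
    · rw [Real.negMulLog, Real.negMulLog, Real.log_div h two_ne_zero]; ring
  have hc : (1 / 2 : ℝ) • a + (1 / 2 : ℝ) • b = (a + b) / 2 := by simp only [smul_eq_mul]; ring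
  constructor
  · have := Real.concaveOn_negMulLog.2 (Set.mem_Ici.2 ha) (Set.mem_Ici.2 hb)
      (show (0 : ℝ) ≤ 1 / 2 by norm_num) (show (0 : ℝ) ≤ 1 / 2 by norm_num) (by norm_num)
    rw [hc] at this
    simp only [smul_eq_mul] at this
    linarith
  · intro h
    by_contra hne
    have := Real.strictConcaveOn_negMulLog.2 (Set.mem_Ici.2 ha) (Set.mem_Ici.2 hb) hne
      (show (0 : ℝ) < 1 / 2 by norm_num) (show (0 : ℝ) < 1 / 2 by norm_num) (by norm_num)
    rw [hc] at this
    simp only [smul_eq_mul] at this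
    linarith

open Matrix in
lemma weak_sub {κ ι : Type} [Fintype κ] [DecidableEq κ] [Fintype ι] [DecidableEq ι]
    (e : κ ≃ Fin 2 × ι) (ρ : Matrix κ κ ℂ) (σ : Matrix ι ι ℂ) (hρ : ρ.PosSemidef)
    (hσ : σ.PosSemidef) (htr : σ.trace = 1)
    (hpt : ∀ u v, σ u v = ∑ a, ρ (e.symm (a, u)) (e.symm (a, v))) :
    vnEntropy ρ ≤ Real.log 2 + vnEntropy σ ∧
    (vnEntropy ρ = Real.log 2 + vnEntropy σ →
      ∀ a b u v, ρ (e.symm (a, u)) (e.symm (b, v)) = if a = b then σ u v / 2 else 0) := by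
  obtain ⟨U, m, hU, hU', hm, hσU, hS⟩ := vn_spec σ hσ
  obtain ⟨V, hV⟩ : ∃ V : Matrix κ (Fin 2 × ι) ℂ, ∀ a u b j,
      V (e.symm (a, u)) (b, j) = if a = b then U u j else 0 :=
    ⟨fun k p => if (e k).1 = p.1 then U (e k).2 p.2 else 0, fun a u b j => by simp⟩
  have hUa : ∀ u v, ∑ j, U u j * star (U v j) = if u = v then 1 else 0 := by
    intro u v
    have := congrFun (congrFun hU u) v
    simpa [mul_apply, one_apply] using this
  have hUb : ∀ u v, ∑ j, star (U j u) * U j v = if u = v then 1 else 0 := by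
    intro u v
    have := congrFun (congrFun hU' u) v
    simpa [mul_apply, one_apply] using this
  have hV1 : V * Vᴴ = 1 := by
    ext k k'
    obtain ⟨⟨a, u⟩, rfl⟩ := e.symm.surjective k
    obtain ⟨⟨b, v⟩, rfl⟩ := e.symm.surjective k'
    rw [mul_apply, Fintype.sum_prod_type, one_apply]
    have := hUa u v
    simp only [Complex.star_def] at this
    fin_cases a <;> fin_cases b <;> simp [conjTranspose_apply, hV, this]
  have hV2 : Vᴴ * V = 1 := by
    ext ⟨a, u⟩ ⟨b, v⟩
    rw [mul_apply, ← e.symm.sum_comp, Fintype.sum_prod_type, one_apply]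
    have := hUb u v
    simp only [Complex.star_def] at this
    fin_cases a <;> fin_cases b <;> simp [conjTranspose_apply, hV, this]
  have hM : (Vᴴ * ρ * V).PosSemidef := hρ.conjTranspose_mul_mul_same V
  obtain ⟨d, hd⟩ : ∃ d : Fin 2 × ι → ℝ, ∀ p, (Vᴴ * ρ * V) p p = (d p : ℂ) := by
    refine ⟨fun p => ((Vᴴ * ρ * V) p p).re, fun p => ?_⟩
    exact (hM.1.coe_re_apply_self p).symm
  obtain ⟨hd0, hle, heq⟩ := schur_horn ρ hρ V hV1 hV2 d hd
  have hsum : ∀ j, d (0, j) + d (1, j) = m j := by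
    intro j
    have h1 : (Uᴴ * σ * U) j j = (m j : ℂ) := by
      rw [hσU]
      have : Uᴴ * (U * diagonal (fun i => (m i : ℂ)) * Uᴴ) * U
          = (Uᴴ * U) * diagonal (fun i => (m i : ℂ)) * (Uᴴ * U) := by
        simp only [Matrix.mul_assoc]
      rw [this, hU']; simp
    have h2 : (d (0, j) : ℂ) + d (1, j) = (Uᴴ * σ * U) j j := by
      rw [← hd, ← hd]
      simp only [mul_apply, conjTranspose_apply, Finset.sum_mul]
      rw [← e.symm.sum_comp, ← e.symm.sum_comp]
      simp only [← e.symm.sum_comp (fun k => star (V k _) * ρ k _ * _), Fintype.sum_prod_type,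
        Fin.sum_univ_two, hpt]
      simp [hV, ← Finset.sum_add_distrib, mul_add, add_mul]
    rw [h1] at h2
    exact_mod_cast h2
  have hmtr : ∑ j, m j = 1 := by
    have : σ.trace = ∑ j, (m j : ℂ) := by
      rw [hσU, trace_mul_comm, ← Matrix.mul_assoc, hU', Matrix.one_mul, trace_diagonal]
    rw [htr] at this
    exact_mod_cast this.symm
  have htot : Real.log 2 + vnEntropy σ = ∑ j, (Real.negMulLog (m j) + m j * Real.log 2) := by
    rw [Finset.sum_add_distrib, ← Finset.sum_mul, hmtr, hS]; ring
  have hD : ∑ p, Real.negMulLog (d p)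
      = ∑ j, (Real.negMulLog (d (0, j)) + Real.negMulLog (d (1, j))) := by
    rw [Fintype.sum_prod_type, Fin.sum_univ_two, Finset.sum_add_distrib]
  have hj : ∀ j ∈ Finset.univ, Real.negMulLog (d (0, j)) + Real.negMulLog (d (1, j)) ≤
      Real.negMulLog (m j) + m j * Real.log 2 := by
    intro j _
    rw [← hsum j]
    exact (eta_two _ _ (hd0 _) (hd0 _)).1
  have hle2 := Finset.sum_le_sum hj
  refine ⟨by rw [htot]; linarith, fun hE => ?_⟩
  have e1 : vnEntropy ρ = ∑ p, Real.negMulLog (d p) := by linarith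
  have e2 := (Finset.sum_eq_sum_iff_of_le hj).1 (by linarith)
  have hdd : ∀ a j, d (a, j) = m j / 2 := by
    intro a j
    have h3 := e2 j (Finset.mem_univ _)
    rw [← hsum j] at h3
    have h4 := (eta_two _ _ (hd0 _) (hd0 _)).2 h3
    have h5 := hsum j
    fin_cases a
    · change d (0, j) = _
      linarith
    · change d (1, j) = _
      linarith
  intro a b u v
  have hfin := heq e1
  have hσuv : σ u v = ∑ j, U u j * m j * star (U v j) := by
    rw [hσU]; simp [mul_apply, diagonal_apply]
  rw [hfin, hσuv, mul_apply, Fintype.sum_prod_type]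
  simp only [mul_diagonal, hdd, hV, conjTranspose_apply, Fin.sum_univ_two]
  fin_cases a <;> fin_cases b <;> simp [Finset.sum_div]
  all_goals exact Finset.sum_congr rfl fun j _ => by ring

lemma vn_roots {ι : Type} [Fintype ι] [DecidableEq ι] (ρ : Matrix ι ι ℂ) (h : ρ.IsHermitian) :
    vnEntropy ρ = (ρ.charpoly.roots.map (fun z => Real.negMulLog z.re)).sum := by
  rw [vnEntropy, dif_pos h, h.roots_charpoly_eq_eigenvalues]
  rw [Multiset.map_map]
  simp only [Function.comp_apply]
  rfl

open Matrix in
lemma vn_gram {ι κ : Type} [Fintype ι] [DecidableEq ι] [Fintype κ] [DecidableEq κ]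
    (M : Matrix ι κ ℂ) : vnEntropy (M * Mᴴ) = vnEntropy (Mᴴ * M)ᵀ := by
  rw [vn_roots _ (isHermitian_mul_conjTranspose_self M),
    vn_roots _ (isHermitian_conjTranspose_mul_self M).transpose, charpoly_transpose]
  have h := congrArg Polynomial.roots (charpoly_mul_comm' M Mᴴ)
  rw [Polynomial.roots_mul (mul_ne_zero (by simp) (charpoly_monic _).ne_zero),
    Polynomial.roots_mul (mul_ne_zero (by simp) (charpoly_monic _).ne_zero)] at h
  have h2 := congrArg (fun s => (s.map (fun z : ℂ => Real.negMulLog z.re)).sum) h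
  simpa [Multiset.map_nsmul, Multiset.sum_nsmul] using h2

/-- kernel of the reduced density on full strings -/
def FK {m : ℕ} (ψ : (Fin m → Fin 2) → ℂ) (A : Finset (Fin m)) (z z' : Fin m → Fin 2) : ℂ :=
  reducedDensity ψ A (fun y => z y) (fun y => z' y)

lemma FK_eq {m : ℕ} (ψ : (Fin m → Fin 2) → ℂ) (A : Finset (Fin m)) (z z' : Fin m → Fin 2) :
    FK ψ A z z' = ∑ y : Fin m → Fin 2, if (∀ x ∈ A, y x = z x) then
      ψ y * (starRingEnd ℂ) (ψ (A.piecewise z' y)) else 0 := by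
  rw [FK, reducedDensity, ← Finset.sum_filter]
  refine Finset.sum_nbij' (fun w => glue A (fun y => z y) w) (fun y x => y x.1) ?_ ?_ ?_ ?_ ?_
  · intro w _
    simp only [Finset.mem_filter, Finset.mem_univ, true_and]
    intro x hx
    simp [glue, hx]
  · intro y _; simp
  · intro w _
    funext x
    have := Finset.mem_compl.1 x.2
    simp [glue, this]
  · intro y hy
    simp only [Finset.mem_filter, Finset.mem_univ, true_and] at hy
    funext x
    by_cases hx : x ∈ A
    · simp [glue, hx, hy x hx]
    · simp [glue, hx]
  · intro w _
    congr 3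
    funext x
    by_cases hx : x ∈ A <;> simp [glue, hx]

lemma FK_trace {m : ℕ} (ψ : (Fin m → Fin 2) → ℂ) (A : Finset (Fin m)) (x : Fin m) (hx : x ∉ A)
    (z z' : Fin m → Fin 2) :
    FK ψ A z z' = ∑ a, FK ψ (insert x A) (Function.update z x a) (Function.update z' x a) := by
  simp only [FK_eq]
  rw [Finset.sum_comm]
  refine Finset.sum_congr rfl fun y _ => ?_
  rw [Finset.sum_eq_single (y x)]
  · have h1 : (∀ t ∈ insert x A, y t = Function.update z x (y x) t) ↔ ∀ t ∈ A, y t = z t := by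
      constructor
      · intro h t ht
        have := h t (Finset.mem_insert_of_mem ht)
        rwa [Function.update_of_ne (by rintro rfl; exact hx ht)] at this
      · intro h t ht
        rcases eq_or_ne t x with rfl | hne
        · simp
        · rw [Function.update_of_ne hne]
          exact h t ((Finset.mem_insert.1 ht).resolve_left hne)
    have h2 : (insert x A).piecewise (Function.update z' x (y x)) y = A.piecewise z' y := by
      funext t
      rcases eq_or_ne t x with rfl | hne
      · simp [hx]
      · by_cases ht : t ∈ A <;> simp [ht, hne, Finset.piecewise]
    simp only [h1, h2]
  · intro a _ ha
    rw [if_neg]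
    intro h
    have := h x (Finset.mem_insert_self _ _)
    simp at this
    exact ha this.symm
  · simp

lemma FK_congr {m : ℕ} (ψ : (Fin m → Fin 2) → ℂ) (A : Finset (Fin m)) {z z' y y' : Fin m → Fin 2}
    (h : ∀ x ∈ A, z x = y x) (h' : ∀ x ∈ A, z' x = y' x) : FK ψ A z z' = FK ψ A y y' := by
  unfold FK
  congr 1 <;> funext x
  · exact h x x.2
  · exact h' x x.2

/-- extension by zero -/
def ext0 {m : ℕ} (A : Finset (Fin m)) (u : {x // x ∈ A} → Fin 2) : Fin m → Fin 2 :=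
  fun x => if h : x ∈ A then u ⟨x, h⟩ else 0

lemma FK_ext0 {m : ℕ} (ψ : (Fin m → Fin 2) → ℂ) (A : Finset (Fin m))
    (u v : {x // x ∈ A} → Fin 2) : reducedDensity ψ A u v = FK ψ A (ext0 A u) (ext0 A v) := by
  unfold FK
  congr 1 <;> funext x <;> simp [ext0]

/-- qubit `x` is maximally mixed and uncorrelated with `B` -/
def PR {m : ℕ} (ψ : (Fin m → Fin 2) → ℂ) (x : Fin m) (B : Finset (Fin m)) : Prop :=
  ∀ z z', FK ψ (insert x B) z z' = if z x = z' x then FK ψ B z z' / 2 else 0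

lemma PR_drop {m : ℕ} (ψ : (Fin m → Fin 2) → ℂ) (x y : Fin m) (A : Finset (Fin m))
    (hxy : x ≠ y) (hy : y ∉ A) (h : PR ψ x (insert y A)) : PR ψ x A := by
  intro z z'
  rw [FK_trace ψ (insert x A) y (by simp [hy, hxy.symm]), FK_trace ψ A y hy, Finset.insert_comm]
  simp only [h _ _, Function.update_of_ne hxy]
  split_ifs
  · rw [Finset.sum_div]
  · simp

lemma PR_mono {m : ℕ} (ψ : (Fin m → Fin 2) → ℂ) (x : Fin m) (A B : Finset (Fin m)) (hAB : A ⊆ B)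
    (hx : x ∉ B) (h : PR ψ x B) : PR ψ x A := by
  induction hk : (B \ A).card generalizing B with
  | zero =>
    have : B ⊆ A := by simpa using hk
    rwa [Finset.Subset.antisymm hAB this]
  | succ k ih =>
    obtain ⟨y, hy⟩ : (B \ A).Nonempty := by rw [← Finset.card_pos]; omega
    have hyB := (Finset.mem_sdiff.1 hy).1
    have hyA := (Finset.mem_sdiff.1 hy).2
    refine ih (B.erase y) (Finset.subset_erase.2 ⟨hAB, hyA⟩) (fun h => hx (Finset.mem_of_mem_erase h))
      (PR_drop ψ x y _ (by rintro rfl; exact hx hyB) (by simp) (by rwa [Finset.insert_erase hyB])) ?_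
    rw [Finset.erase_sdiff_comm, Finset.card_erase_of_mem hy, hk]; rfl

lemma MM_iff {m : ℕ} (ψ : (Fin m → Fin 2) → ℂ) (A : Finset (Fin m)) :
    MaximallyMixed ψ A ↔ ∀ z z', FK ψ A z z' =
      if (∀ x ∈ A, z x = z' x) then ((2 : ℂ) ^ A.card)⁻¹ else 0 := by
  unfold MaximallyMixed
  constructor
  · intro h z z'
    rw [FK, h]
    simp [Matrix.one_apply, funext_iff]
  · intro h
    ext u v
    rw [FK_ext0, h]
    have : (∀ x ∈ A, ext0 A u x = ext0 A v x) ↔ u = v := by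
      constructor
      · intro h; funext x; simpa [ext0] using h x x.2
      · rintro rfl _ _; rfl
    simp [Matrix.one_apply, this]

lemma MM_insert {m : ℕ} (ψ : (Fin m → Fin 2) → ℂ) (x : Fin m) (B : Finset (Fin m)) (hx : x ∉ B)
    (h : PR ψ x B) (hB : MaximallyMixed ψ B) : MaximallyMixed ψ (insert x B) := by
  rw [MM_iff] at *
  intro z z'
  rw [h, hB, Finset.card_insert_of_notMem hx]
  simp only [Finset.forall_mem_insert]
  by_cases h1 : z x = z' x <;> by_cases h2 : ∀ t ∈ B, z t = z' t <;> simp [h1, h2, pow_succ]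
  · rw [if_pos h2, if_pos h2]; ring

lemma MM_empty {m : ℕ} (ψ : (Fin m → Fin 2) → ℂ) (h : ∑ x, ‖ψ x‖ ^ 2 = 1) :
    MaximallyMixed ψ ∅ := by
  rw [MM_iff]
  intro z z'
  rw [FK_eq]
  simp only [Finset.notMem_empty, false_imp_iff, implies_true, if_true, Finset.piecewise_empty,
    Complex.mul_conj, Complex.normSq_eq_norm_sq]
  have : ((∑ x, ‖ψ x‖ ^ 2 : ℝ) : ℂ) = 1 := by rw [h]; simp
  simpa using this

open Matrix in
lemma rd_gram {m : ℕ} (ψ : (Fin m → Fin 2) → ℂ) (A : Finset (Fin m)) :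
    reducedDensity ψ A = (Matrix.of fun u w => ψ (glue A u w)) *
      (Matrix.of fun u w => ψ (glue A u w))ᴴ := by
  ext u v
  simp [reducedDensity, mul_apply]

lemma rd_psd {m : ℕ} (ψ : (Fin m → Fin 2) → ℂ) (A : Finset (Fin m)) :
    (reducedDensity ψ A).PosSemidef := by
  rw [rd_gram]; exact Matrix.posSemidef_self_mul_conjTranspose _

lemma FK_diag {m : ℕ} (ψ : (Fin m → Fin 2) → ℂ) (A : Finset (Fin m)) (z : Fin m → Fin 2) :
    FK ψ A z z = ∑ y : Fin m → Fin 2, if (∀ x ∈ A, y x = z x) then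
      ((‖ψ y‖ ^ 2 : ℝ) : ℂ) else 0 := by
  rw [FK_eq]
  refine Finset.sum_congr rfl fun y _ => ?_
  split_ifs with h
  · have : A.piecewise z y = y := by
      funext x
      by_cases hx : x ∈ A <;> simp [hx, h]
    rw [this, Complex.mul_conj, Complex.normSq_eq_norm_sq]
  · rfl

lemma rd_trace {m : ℕ} (ψ : (Fin m → Fin 2) → ℂ) (h : ∑ x, ‖ψ x‖ ^ 2 = 1) (A : Finset (Fin m)) :
    (reducedDensity ψ A).trace = 1 := by
  simp only [Matrix.trace, Matrix.diag_apply, FK_ext0, FK_diag]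
  rw [Finset.sum_comm]
  have : ((∑ x, ‖ψ x‖ ^ 2 : ℝ) : ℂ) = 1 := by rw [h]; simp
  rw [← this, Complex.ofReal_sum]
  refine Finset.sum_congr rfl fun y _ => ?_
  rw [Finset.sum_eq_single (fun x => y x.1)]
  · rw [if_pos]
    intro x hx; simp [ext0, hx]
  · intro u _ hu
    rw [if_neg]
    intro hh
    apply hu
    funext x
    have := hh x x.2
    simp [ext0] at this
    exact this.symm
  · simp

/-- splitting off one bit -/
def splitEquiv {m : ℕ} (x : Fin m) (B : Finset (Fin m)) (hx : x ∉ B) :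
    ({y // y ∈ insert x B} → Fin 2) ≃ Fin 2 × ({y // y ∈ B} → Fin 2) where
  toFun u := (u ⟨x, Finset.mem_insert_self _ _⟩, fun y => u ⟨y, Finset.mem_insert_of_mem y.2⟩)
  invFun p := fun y => Function.update (ext0 B p.2) x p.1 y
  left_inv u := by
    funext ⟨y, hy⟩
    rcases eq_or_ne y x with rfl | hne
    · simp
    · have : y ∈ B := (Finset.mem_insert.1 hy).resolve_left hne
      simp [hne, ext0, this]
  right_inv p := by
    obtain ⟨a, u⟩ := p
    simp only [Function.update_self, Prod.mk.injEq, true_and]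
    funext ⟨y, hy⟩
    have : y ≠ x := by rintro rfl; exact hx hy
    simp [this, ext0, hy]

lemma Sent_weak {m : ℕ} (ψ : (Fin m → Fin 2) → ℂ) (h : ∑ x, ‖ψ x‖ ^ 2 = 1) (x : Fin m)
    (B : Finset (Fin m)) (hx : x ∉ B) :
    Sent ψ (insert x B) ≤ Real.log 2 + Sent ψ B ∧
    (Sent ψ (insert x B) = Real.log 2 + Sent ψ B → PR ψ x B) := by
  have hw := weak_sub (splitEquiv x B hx) (reducedDensity ψ (insert x B)) (reducedDensity ψ B)
    (rd_psd _ _) (rd_psd _ _) (rd_trace ψ h B) (by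
      intro u v
      rw [FK_ext0, FK_trace ψ B x hx]
      rfl)
  refine ⟨hw.1, fun heq z z' => ?_⟩
  have := hw.2 heq (z x) (z' x) (fun y => z y) (fun y => z' y)
  rw [FK, ← (splitEquiv x B hx).symm_apply_apply (fun y => z y),
    ← (splitEquiv x B hx).symm_apply_apply (fun y => z' y)]
  exact this

lemma Sent_compl {m : ℕ} (ψ : (Fin m → Fin 2) → ℂ) (A : Finset (Fin m)) :
    Sent ψ Aᶜ = Sent ψ A := by
  unfold Sent
  conv_rhs => rw [rd_gram, vn_gram]
  congr 1
  have hA : Aᶜᶜ = A := compl_compl A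
  ext w w'
  simp only [reducedDensity, Matrix.transpose_apply, Matrix.mul_apply, Matrix.conjTranspose_apply,
    Matrix.of_apply]
  refine Fintype.sum_equiv (Equiv.piCongrLeft' (fun _ => Fin 2)
    (Equiv.subtypeEquivRight (fun x => by rw [hA]))) _ _ fun u => ?_
  rw [mul_comm]
  have hg : ∀ w, glue Aᶜ w u = glue A ((Equiv.piCongrLeft' (fun _ => Fin 2)
    (Equiv.subtypeEquivRight (fun x => by rw [hA]))) u) w := by
    intro w
    funext x
    by_cases hx : x ∈ A
    · simp [glue, hx, Equiv.piCongrLeft']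
      rfl
    · simp [glue, hx]
  rw [hg, hg]
  rfl

lemma Sent_weak' {m : ℕ} (ψ : (Fin m → Fin 2) → ℂ) (h : ∑ x, ‖ψ x‖ ^ 2 = 1) (x : Fin m)
    (B : Finset (Fin m)) (hx : x ∉ B) : Sent ψ B ≤ Real.log 2 + Sent ψ (insert x B) := by
  have h1 := (Sent_weak ψ h x (insert x B)ᶜ (by simp)).1
  have h2 : insert x (insert x B)ᶜ = Bᶜ := by
    ext y
    by_cases hy : y = x
    · subst hy; simp [hx]
    · simp [hy]
  rwa [h2, Sent_compl, Sent_compl] at h1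

lemma exists_min {n : ℕ} (Γ : Finset (Fin n) → Prop) (A : Finset (Fin n)) (hA : Γ A) :
    ∃ C ⊆ A, IsMinimal Γ C := by
  induction A using Finset.strongInduction with
  | H A ih =>
    by_cases h : ∃ B, B ⊂ A ∧ Γ B
    · obtain ⟨B, hB, hΓ⟩ := h
      obtain ⟨C, hC, hm⟩ := ih B hB hΓ
      exact ⟨C, hC.trans hB.1, hm⟩
    · push Not at h
      exact ⟨A, subset_rfl, hA, h⟩

lemma zero_notMem_posOf {n : ℕ} (A : Finset (Fin n)) : (0 : Fin (n + 1)) ∉ posOf A := by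
  simp [posOf]

lemma succ_mem_posOf {n : ℕ} (A : Finset (Fin n)) (i : Fin n) : i.succ ∈ posOf A ↔ i ∈ A := by
  simp [posOf]

lemma qss_R {n : ℕ} (Γ : Finset (Fin n) → Prop) (ψ : (Fin (n + 1) → Fin 2) → ℂ)
    (hψ : IsPureQSSState Γ ψ) (A : Finset (Fin n)) (hA : Γ A) : Sent ψ {0} = Real.log 2 := by
  have h1 := hψ.recover A hA
  have h2 := Sent_weak' ψ hψ.normalized 0 (posOf A) (zero_notMem_posOf A)
  have h3 := (Sent_weak ψ hψ.normalized 0 ∅ (by simp)).1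
  have h4 : Sent ψ (∅ : Finset (Fin (n + 1))) = 0 := by
    have h5 := (MM_empty ψ hψ.normalized)
    have h6 : reducedDensity ψ ∅ = 1 := by
      rw [MaximallyMixed] at h5
      simpa using h5
    rw [Sent, h6, vn_roots _ Matrix.isHermitian_one]
    have h7 : (Polynomial.X - 1 : Polynomial ℂ).roots = {1} := by
      simpa using Polynomial.roots_X_sub_C (1 : ℂ)
    simp [Matrix.charpoly_one, h7]
  rw [h4] at h3
  simp only [insert_empty_eq] at h3
  linarith

lemma qss_pivot {n : ℕ} (Γ : Finset (Fin n) → Prop) (ψ : (Fin (n + 1) → Fin 2) → ℂ)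
    (hψ : IsPureQSSState Γ ψ) (B : Finset (Fin n)) (i : Fin n) (hi : i ∉ B) (hB : ¬ Γ B)
    (hA : Γ (insert i B)) : PR ψ i.succ (posOf B) := by
  have hR := qss_R Γ ψ hψ _ hA
  have h1 := hψ.recover _ hA
  have h2 := hψ.secrecy _ hB
  have hins : posOf (insert i B) = insert i.succ (posOf B) := by simp [posOf, Finset.image_insert]
  have hi' : i.succ ∉ posOf B := by rwa [succ_mem_posOf]
  have h3 := Sent_weak' ψ hψ.normalized i.succ (insert 0 (posOf B))
    (by simp [Fin.succ_ne_zero, hi'])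
  obtain ⟨h4, h5⟩ := Sent_weak ψ hψ.normalized i.succ (posOf B) hi'
  rw [hins, Finset.insert_comm] at h1
  exact h5 (by linarith)

lemma exists_pivot {n : ℕ} (Γ : Finset (Fin n) → Prop)
    (hmono : Monotonic Γ) (hnc : NoCloning Γ) (hnr : NoRedundancy Γ) (i j : Fin n) (hij : i ≠ j) :
    ∃ B, j ∈ B ∧ i ∉ B ∧ ¬ Γ B ∧ Γ (insert i B) := by
  have hmin : ∀ C, IsMinimal Γ C → i ∈ C → j ∈ C →
      ∃ B, j ∈ B ∧ i ∉ B ∧ ¬ Γ B ∧ Γ (insert i B) := fun C hC hi hj =>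
    ⟨C.erase i, Finset.mem_erase.2 ⟨hij.symm, hj⟩, by simp, hC.2 _ (Finset.erase_ssubset hi),
      by rw [Finset.insert_erase hi]; exact hC.1⟩
  have hint : ∀ X Y : Finset (Fin n), Γ X → Γ Y → ∃ t ∈ X, t ∈ Y := by
    intro X Y hX hY
    by_contra h
    push Not at h
    exact (hnc X).1 hX (hmono Y Xᶜ hY fun t ht => Finset.mem_compl.2 fun hx => h t hx ht)
  obtain ⟨A, hA, hiA⟩ := hnr i
  by_cases hjA : j ∈ A
  · exact hmin A hA hiA hjA
  by_cases hBj : Γ (insert j (A.erase i))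
  · have hu : ¬ Γ (A.erase i) := hA.2 _ (Finset.erase_ssubset hiA)
    have hc : Γ (A.erase i)ᶜ := by
      rw [hnc, compl_compl]; exact hu
    obtain ⟨C, hCs, hC⟩ := exists_min Γ _ hc
    have hav : ∀ t ∈ C, t ∉ A.erase i := fun t ht => Finset.mem_compl.1 (hCs ht)
    obtain ⟨t, htC, htA⟩ := hint C A hC.1 hA.1
    have hti : t = i := by
      by_contra hne
      exact hav t htC (Finset.mem_erase.2 ⟨hne, htA⟩)
    obtain ⟨s, hsC, hsA⟩ := hint C _ hC.1 hBj
    have hsj : s = j := (Finset.mem_insert.1 hsA).resolve_right (hav s hsC)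
    subst hti hsj
    exact hmin C hC htC hsC
  · refine ⟨insert j (A.erase i), by simp, by simp [hij], hBj, hmono A _ hA.1 ?_⟩
    intro t ht
    by_cases h : t = i <;> simp [h, ht]

theorem stmt7 (n : ℕ) (hn : 5 ≤ n) (Γ : Finset (Fin n) → Prop)
    (hmono : Monotonic Γ) (hnc : NoCloning Γ) (hnr : NoRedundancy Γ)
    (hhom : ∀ A : Finset (Fin n), IsMinimal Γ A → A.card = 3)
    (ψ : (Fin (n + 1) → Fin 2) → ℂ) (hψ : IsPureQSSState Γ ψ) :
    ∀ A : Finset (Fin (n + 1)), A.card ≤ 2 → MaximallyMixed ψ A := by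
  have hpair : ∀ i j : Fin n, i ≠ j → PR ψ i.succ {j.succ} ∧ PR ψ i.succ ∅ := by
    intro i j hij
    obtain ⟨B, hjB, hiB, hB, hA⟩ := exists_pivot Γ hmono hnc hnr i j hij
    have h := qss_pivot Γ ψ hψ B i hiB hB hA
    have hi' : i.succ ∉ posOf B := by rwa [succ_mem_posOf]
    exact ⟨PR_mono ψ _ _ _ (by simpa [succ_mem_posOf] using hjB) hi' h,
      PR_mono ψ _ _ _ (by simp) hi' h⟩
  have hother : ∀ i : Fin n, ∃ j, i ≠ j := by
    intro i
    have : Nontrivial (Fin n) := Fin.nontrivial_iff_two_le.2 (by omega)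
    obtain ⟨j, hj⟩ := exists_ne i
    exact ⟨j, hj.symm⟩
  have hRi : ∀ i : Fin n, PR ψ 0 {i.succ} := by
    intro i
    obtain ⟨A, hA, -⟩ := hnr i
    have hR := qss_R Γ ψ hψ A hA.1
    have hun : ¬ Γ {i} := by
      intro h
      obtain ⟨C, hC, hm⟩ := exists_min Γ _ h
      have h1 := hhom C hm
      have h2 := Finset.card_le_card hC
      simp at h2
      omega
    have h1 := hψ.secrecy _ hun
    have hp : posOf ({i} : Finset (Fin n)) = {i.succ} := by simp [posOf]
    rw [hp] at h1
    exact (Sent_weak ψ hψ.normalized 0 {i.succ} (by simp [(Fin.succ_ne_zero i).symm])).2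
      (by linarith)
  have h0 := MM_empty ψ hψ.normalized
  have hone : ∀ x : Fin (n + 1), MaximallyMixed ψ {x} := by
    intro x
    have key : PR ψ x ∅ := by
      refine Fin.cases ?_ (fun i => ?_) x
      · exact PR_mono ψ 0 ∅ _ (by simp) (by simp [(Fin.succ_ne_zero _).symm]) (hRi ⟨0, by omega⟩)
      · obtain ⟨j, hj⟩ := hother i
        exact (hpair i j hj).2
    simpa using MM_insert ψ x ∅ (by simp) key h0
  intro A hA
  have hcases : A.card = 0 ∨ A.card = 1 ∨ A.card = 2 := by omega
  rcases hcases with h | h | h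
  · rw [Finset.card_eq_zero.1 h]; exact h0
  · obtain ⟨x, rfl⟩ := Finset.card_eq_one.1 h
    exact hone x
  · obtain ⟨x, y, hxy, rfl⟩ := Finset.card_eq_two.1 h
    rcases Fin.eq_zero_or_eq_succ x with rfl | ⟨i, rfl⟩
    · rcases Fin.eq_zero_or_eq_succ y with rfl | ⟨j, rfl⟩
      · exact absurd rfl hxy
      · exact MM_insert ψ _ _ (by simpa using hxy) (hRi j) (hone _)
    · rcases Fin.eq_zero_or_eq_succ y with rfl | ⟨j, rfl⟩
      · rw [Finset.pair_comm]
        exact MM_insert ψ _ _ (by simpa using hxy.symm) (hRi i) (hone _)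
      · exact MM_insert ψ _ _ (by simpa using hxy)
          (hpair i j (fun h => hxy (by rw [h]))).1 (hone _)
end
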